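/- Let Γ be a connected non-bipartite graph such that the vertex set of every odd cycle of Γ is a dominating set. If H^1_m(R/I^t) ≠ 0 for some t ≥ 1, then H^1_m(R/I^{t+1}) ≠ 0. -/

import Mathlib

open MvPolynomial

noncomputable section

/-- The edge ideal of a graph `Γ` on vertex set `σ`, in `k[x_i : i ∈ σ]`. -/
def edgeIdeal (k : Type) [Field k] {σ : Type} (Γ : SimpleGraph σ) :
    Ideal (MvPolynomial σ k) :=
  Ideal.span { m | ∃ i j : σ, Γ.Adj i j ∧ m = X i * X j }

/-- The maximal graded ideal `(x_i : i ∈ σ)` of `k[x_i : i ∈ σ]`. -/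
def maxIdeal (k : Type) [Field k] (σ : Type) : Ideal (MvPolynomial σ k) :=
  Ideal.span (Set.range (X : σ → MvPolynomial σ k))

/-- `depth R/J = 0`, i.e. the maximal graded ideal is an associated prime of `R/J`. -/
def DepthZero (k : Type) [Field k] {σ : Type} (J : Ideal (MvPolynomial σ k)) : Prop :=
  maxIdeal k σ ∈ associatedPrimes (MvPolynomial σ k) (MvPolynomial σ k ⧸ J)

/-- The `i`-th local cohomology of `R/J` with support in the maximal graded ideal. -/
def locCoh (k : Type) [Field k] {σ : Type} (J : Ideal (MvPolynomial σ k)) (i : ℕ) :=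
  (localCohomology (maxIdeal k σ) i).obj (ModuleCat.of _ (MvPolynomial σ k ⧸ J))

/-- `depth R/J`, defined as the least `i` with `H^i_m(R/J) ≠ 0`. -/
def rDepth (k : Type) [Field k] {σ : Type} (J : Ideal (MvPolynomial σ k)) : ℕ :=
  sInf { i | Nontrivial (locCoh k J i) }

/-- A set `U` of vertices is dominating: every vertex outside `U` is adjacent to a
vertex of `U`. -/
def Dominating {σ : Type} (Γ : SimpleGraph σ) (U : Set σ) : Prop :=
  ∀ v ∉ U, ∃ u ∈ U, Γ.Adj u v

/-- The closed neighborhood `N[v]` of a vertex. -/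
def closedNbhd {σ : Type} (Γ : SimpleGraph σ) (v : σ) : Set σ :=
  insert v { u | Γ.Adj v u }

/-- The closed neighborhood `N[C]` of a set of vertices. -/
def closedNbhdSet {σ : Type} (Γ : SimpleGraph σ) (C : Set σ) : Set σ :=
  ⋃ v ∈ C, closedNbhd Γ v

/-- An odd cycle of length `m` (given as an injective map `ZMod m → σ` with consecutive
vertices adjacent) in `Γ`. -/
def IsOddCycle {σ : Type} (Γ : SimpleGraph σ) (m : ℕ) (c : ZMod m → σ) : Prop :=
  Odd m ∧ 3 ≤ m ∧ Function.Injective c ∧ ∀ i, Γ.Adj (c i) (c (i + 1))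

/-- `F` is an independent set of `Γ`. -/
def IsIndep {σ : Type} [Fintype σ] [DecidableEq σ] (Γ : SimpleGraph σ) (F : Finset σ) : Prop :=
  ∀ i ∈ F, ∀ j ∈ F, ¬ Γ.Adj i j

/-- `F` is a maximal independent set of `Γ`. -/
def IsMaxIndep {σ : Type} [Fintype σ] [DecidableEq σ] (Γ : SimpleGraph σ) (F : Finset σ) : Prop :=
  IsIndep Γ F ∧ ∀ G : Finset σ, IsIndep Γ G → F ⊆ G → G = F

/-- The prime ideal `P_F = (x_i : i ∉ F)`. -/
def PF (k : Type) [Field k] {σ : Type} [Fintype σ] [DecidableEq σ] (F : Finset σ) :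
    Ideal (MvPolynomial σ k) :=
  Ideal.span { m | ∃ i ∉ F, m = X i }

/-- The `t`-th symbolic power `I^{(t)} = ⋂_{F maximal independent} P_F^t` of the edge ideal. -/
def symbPow (k : Type) [Field k] {σ : Type} [Fintype σ] [DecidableEq σ]
    (Γ : SimpleGraph σ) (t : ℕ) : Ideal (MvPolynomial σ k) :=
  ⨅ F ∈ { F : Finset σ | IsMaxIndep Γ F }, PF k F ^ t

/-- The monomial `x^a`. -/
def xPow (k : Type) [Field k] {σ : Type} [Fintype σ] (a : σ → ℕ) : MvPolynomial σ k :=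
  ∏ i, X i ^ a i

/-- The localization `R[x_i^{-1} : i ∈ F]`. -/
abbrev locAt (k : Type) [Field k] {σ : Type} (F : Finset σ) :=
  Localization (Submonoid.closure ((fun i => (X i : MvPolynomial σ k)) '' (F : Set σ)))

/-- The degree complex `Δ_a(J) = {F : x^a ∉ J·R[x_i^{-1} : i ∈ F]}` of a monomial ideal `J`. -/
def degComplex (k : Type) [Field k] {σ : Type} [Fintype σ] (J : Ideal (MvPolynomial σ k))
    (a : σ → ℕ) : Set (Finset σ) :=
  { F | algebraMap (MvPolynomial σ k) (locAt k F) (xPow k a) ∉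
      J.map (algebraMap (MvPolynomial σ k) (locAt k F)) }

/-- `F` is a facet (maximal face) of the complex `Δ`. -/
def IsFacet {σ : Type} (Δ : Set (Finset σ)) (F : Finset σ) : Prop :=
  F ∈ Δ ∧ ∀ G ∈ Δ, F ⊆ G → G = F

/-- The complex `Δ` is disconnected: its vertex set splits into two nonempty parts such that
no face meets both. -/
def ComplexDisconnected {σ : Type} (Δ : Set (Finset σ)) : Prop :=
  ∃ A B : Set σ, A.Nonempty ∧ B.Nonempty ∧ Disjoint A B ∧
    (∀ i, {i} ∈ Δ ↔ i ∈ A ∪ B) ∧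
    ∀ F ∈ Δ, ¬ ((∃ i ∈ F, i ∈ A) ∧ (∃ j ∈ F, j ∈ B))

/-- The polynomial ring `R_v = k[x_i : i ≠ v]`. -/
abbrev Rv (k : Type) [Field k] {σ : Type} (v : σ) := MvPolynomial { i : σ // i ≠ v } k

/-- The localization `R[x_v^{-1}]`. -/
abbrev LocAway (k : Type) [Field k] {σ : Type} (v : σ) :=
  Localization.Away (X v : MvPolynomial σ k)

/-- For an ideal `I` of `R`, the ideal `I_v = I·R[x_v^{-1}] ∩ R_v` of `R_v`. -/
def idealV (k : Type) [Field k] {σ : Type} (I : Ideal (MvPolynomial σ k)) (v : σ) :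
    Ideal (Rv k v) :=
  Ideal.comap ((algebraMap (MvPolynomial σ k) (LocAway k v)).comp
      (MvPolynomial.rename (Subtype.val : { i : σ // i ≠ v } → σ)).toRingHom)
    (I.map (algebraMap (MvPolynomial σ k) (LocAway k v)))

/-- The edge ideal of the induced subgraph `Γ_U` in `k[x_i : i ∈ U]`. -/
def edgeIdealOn (k : Type) [Field k] {σ : Type} (Γ : SimpleGraph σ) (U : Set σ) :
    Ideal (MvPolynomial U k) :=
  Ideal.span { m | ∃ i j : U, Γ.Adj (i : σ) (j : σ) ∧ m = X i * X j }

/-- `Γ` has no isolated vertices. -/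
def NoIsolated {σ : Type} (Γ : SimpleGraph σ) : Prop :=
  ∀ v : σ, ∃ u : σ, Γ.Adj v u

/-!
`H¹_𝔪(M) = colim Ext¹(R/𝔪^l, M)` vanishes iff every linear map `𝔪^k → M` becomes, on some `𝔪^l`,
multiplication by an element of `M`.

If a vertex `v` is adjacent to all others, then division by `x_v` is a linear map from a power of
`𝔪` to `R/I^t` that is not eventually a multiplication, so `H¹_𝔪(R/I^t) ≠ 0` for all `t ≥ 1`.

Otherwise, suppose that `H¹_𝔪(R/I^(t+1)) = 0` and take `φ : 𝔪^k → R/I^t`. For an edge `ij`, the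
composite of `φ` with multiplication by `x_i x_j : R/I^t → R/I^(t+1)` is eventually a
multiplication, so the coefficient of `x^a x_i^N` in `φ (x_i^N)` and that of `x^a x_j^N` in
`φ (x_j^N)` agree for large `N`. For arbitrary `i` and `j`, the graph `Γ - N[i]` is bipartite
because odd cycles are dominating, and exchanging edges along alternating paths in it yields
`f ∈ N[j]` such that `I^t` contains no `x^a x_i^M x_f^N`; the coefficients along `i` and `f` then
agree trivially, and those along `f` and `j` by the previous step. Hence these coefficients depend
only on `a` and define an element by which `φ` eventually multiplies.
-/

section ExtCocycles

open CategoryTheory Opposite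

variable (R : Type*) [Ring R] {C : Type*} [Category* C] [Abelian C] [Linear R C]
  {X X' : C} (P : ProjectiveResolution X) (P' : ProjectiveResolution X') (n : ℕ) (Y : C)

/-- The complex `Hom(P, Y)` whose homology is `Ext(X, Y)`. It lives in the opposite category
because `Ext` is defined as a left derived functor with values there. -/
abbrev homComplexOp : ChainComplex (ModuleCat R)ᵒᵖ ℕ :=
  (((linearYoneda R C).obj Y).rightOp.mapHomologicalComplex _).obj P.complex

/-- The `n`-cocycles of `Hom(P, Y)`, as morphisms out of the `n`-th term of the resolution. -/
def extCocycles : Submodule R (P.complex.X n ⟶ Y) :=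
  LinearMap.ker (Linear.leftComp R Y (P.complex.d (n + 1) n))

variable {R P n Y} in
lemma mem_extCocycles {z : P.complex.X n ⟶ Y} :
    z ∈ extCocycles R P n Y ↔ P.complex.d (n + 1) n ≫ z = 0 := Iff.rfl

/-- The inclusion of cocycles into cochains, with the cocycles of `Hom(P, Y)` in the form provided
by the homology API. -/
def opcyclesToHom : ((homComplexOp R P Y).opcycles n).unop ⟶ ModuleCat.of R (P.complex.X n ⟶ Y) :=
  ((homComplexOp R P Y).pOpcycles n).unop

lemma opcyclesToHom_injective : Function.Injective (opcyclesToHom R P n Y) := by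
  have : Mono (opcyclesToHom R P n Y) := unop_mono_of_epi ((homComplexOp R P Y).pOpcycles n)
  exact (ModuleCat.mono_iff_injective _).1 this

lemma range_opcyclesToHom :
    LinearMap.range (opcyclesToHom R P n Y).hom = extCocycles R P n Y := by
  have hexact := (ShortComplex.exact_of_g_is_cokernel
    (ShortComplex.mk _ _ ((homComplexOp R P Y).d_pOpcycles (n + 1) n))
    ((homComplexOp R P Y).opcyclesIsCokernel (n + 1) n (by simp))).unop
  exact hexact.moduleCat_range_eq_ker

/-- The identification of the two descriptions of the cocycles of `Hom(P, Y)`. -/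
def opcyclesEquivCocycles : ((homComplexOp R P Y).opcycles n).unop ≃ₗ[R] extCocycles R P n Y :=
  (LinearEquiv.ofInjective _ (opcyclesToHom_injective R P n Y)).trans
    (LinearEquiv.ofEq _ _ (range_opcyclesToHom R P n Y))

variable {P P' n Y} in
lemma opcyclesEquivCocycles_opcyclesMap (g : P'.complex ⟶ P.complex)
    (w : ((homComplexOp R P Y).opcycles n).unop) :
    (opcyclesEquivCocycles R P' n Y ((HomologicalComplex.opcyclesMap
      ((((linearYoneda R C).obj Y).rightOp.mapHomologicalComplex _).map g) n).unop w) :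
        P'.complex.X n ⟶ Y) = g.f n ≫ (opcyclesEquivCocycles R P n Y w : P.complex.X n ⟶ Y) :=
  congrArg (fun f => f.unop.hom w) (HomologicalComplex.p_opcyclesMap
    ((((linearYoneda R C).obj Y).rightOp.mapHomologicalComplex _).map g) n)

lemma homologyι_unop_eq_zero_iff (w : ((homComplexOp R P Y).opcycles (n + 1)).unop) :
    ((homComplexOp R P Y).homologyι (n + 1)).unop w = 0 ↔ ∃ y : P.complex.X n ⟶ Y,
      opcyclesEquivCocycles R P (n + 1) Y w = P.complex.d (n + 1) n ≫ y := by
  have hexact := (ShortComplex.exact_of_f_is_kernel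
    (ShortComplex.mk _ _ ((homComplexOp R P Y).homologyι_comp_fromOpcycles (n + 1) n))
    ((homComplexOp R P Y).homologyIsKernel (n + 1) n (by simp))).unop
  have hcoboundary (y : P.complex.X n ⟶ Y) :
      opcyclesToHom R P (n + 1) Y (((homComplexOp R P Y).fromOpcycles (n + 1) n).unop y) =
        P.complex.d (n + 1) n ≫ y :=
    congrArg (fun f => f.unop.hom y) ((homComplexOp R P Y).p_fromOpcycles (n + 1) n)
  refine ((ShortComplex.ShortExact.moduleCat_exact_iff_function_exact _).1 hexact w).trans
    (exists_congr fun y => ?_)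
  refine eq_comm.trans ((opcyclesToHom_injective R P (n + 1) Y).eq_iff.symm.trans ?_)
  exact Eq.congr_right (hcoboundary y)

variable [EnoughProjectives C]

/-- `Ext^n(X, Y)` is the homology of `Hom(P, Y)`. -/
def extIsoHomology : (((linearYoneda R C).obj Y).rightOp.leftDerived n).obj X ≅
    (homComplexOp R P Y).homology n :=
  P.isoLeftDerivedObj ((linearYoneda R C).obj Y).rightOp n

/-- The class in `Ext^n(X, Y)` of a cocycle of `Hom(P, Y)`. -/
def extClass : extCocycles R P n Y →ₗ[R] ((Ext R C n).obj (op X)).obj Y :=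
  ((extIsoHomology R P n Y).hom ≫ (homComplexOp R P Y).homologyι n).unop.hom.comp
    (opcyclesEquivCocycles R P n Y).symm.toLinearMap

variable {n Y} in
lemma extClass_opcyclesEquivCocycles (w : ((homComplexOp R P Y).opcycles n).unop) :
    extClass R P n Y (opcyclesEquivCocycles R P n Y w) =
      ((extIsoHomology R P n Y).hom ≫ (homComplexOp R P Y).homologyι n).unop w :=
  congrArg ((extIsoHomology R P n Y).hom ≫ (homComplexOp R P Y).homologyι n).unop
    ((opcyclesEquivCocycles R P n Y).symm_apply_apply w)

lemma extClass_surjective : Function.Surjective (extClass R P n Y) := by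
  have : Epi ((extIsoHomology R P n Y).hom ≫ (homComplexOp R P Y).homologyι n).unop :=
    unop_epi_of_mono _
  exact ((ModuleCat.epi_iff_surjective _).1 this).comp
    (opcyclesEquivCocycles R P n Y).symm.surjective

variable {R P P' n Y}

lemma extClass_eq_zero_iff {z : extCocycles R P (n + 1) Y} :
    extClass R P (n + 1) Y z = 0 ↔
      ∃ y : P.complex.X n ⟶ Y, (z : P.complex.X (n + 1) ⟶ Y) = P.complex.d (n + 1) n ≫ y := by
  obtain ⟨w, rfl⟩ := (opcyclesEquivCocycles R P (n + 1) Y).surjective z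
  rw [← homologyι_unop_eq_zero_iff, extClass_opcyclesEquivCocycles]
  exact (extIsoHomology R P (n + 1) Y).unop.toLinearEquiv.map_eq_zero_iff

lemma map_extClass (f : X' ⟶ X) (g : P'.complex ⟶ P.complex)
    (hg : g.f 0 ≫ P.π.f 0 = P'.π.f 0 ≫ f) {z : extCocycles R P n Y} {z' : extCocycles R P' n Y}
    (hz : (z' : P'.complex.X n ⟶ Y) = g.f n ≫ (z : P.complex.X n ⟶ Y)) :
    ((Ext R C n).map f.op).app Y (extClass R P n Y z) = extClass R P' n Y z' := by
  obtain ⟨w, rfl⟩ := (opcyclesEquivCocycles R P n Y).surjective z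
  let homMap := (((linearYoneda R C).obj Y).rightOp.mapHomologicalComplex _).map g
  obtain rfl : z' = opcyclesEquivCocycles R P' n Y
      ((HomologicalComplex.opcyclesMap homMap n).unop w) :=
    Subtype.ext (hz.trans (opcyclesEquivCocycles_opcyclesMap R g w).symm)
  have hiso : (((linearYoneda R C).obj Y).rightOp.leftDerived n).map f ≫
      (extIsoHomology R P n Y).hom =
        (extIsoHomology R P' n Y).hom ≫ HomologicalComplex.homologyMap homMap n :=
    ProjectiveResolution.isoLeftDerivedObj_hom_naturality f P' P g hg _ n
  have hcomp : (((linearYoneda R C).obj Y).rightOp.leftDerived n).map f ≫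
      (extIsoHomology R P n Y).hom ≫ (homComplexOp R P Y).homologyι n =
        ((extIsoHomology R P' n Y).hom ≫ (homComplexOp R P' Y).homologyι n) ≫
          HomologicalComplex.opcyclesMap homMap n := by
    rw [reassoc_of% hiso, Category.assoc, HomologicalComplex.homologyι_naturality]
  rw [extClass_opcyclesEquivCocycles, extClass_opcyclesEquivCocycles]
  exact congrArg (fun f => f.unop.hom w) hcomp

end ExtCocycles

section Connecting

open CategoryTheory Opposite

universe u

variable {R : Type u} [CommRing R] {F : Type u} [AddCommGroup F] [Module R F] {N N' : Submodule R F}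

section Augmentation

variable (P : ProjectiveResolution (ModuleCat.of R (F ⧸ N)))

/-- The augmentation of a projective resolution of `F ⧸ N`, as a linear map. -/
def augmentation : P.complex.X 0 →ₗ[R] F ⧸ N :=
  (show P.complex.X 0 ⟶ ModuleCat.of R (F ⧸ N) from P.π.f 0).hom

lemma augmentation_surjective : Function.Surjective (augmentation P) :=
  (ModuleCat.epi_iff_surjective (P.π.f 0)).1 inferInstance

lemma exact_d_augmentation : Function.Exact (P.complex.d 1 0).hom (augmentation P) :=
  (ShortComplex.ShortExact.moduleCat_exact_iff_function_exact _).1 P.exact₀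

lemma exact_d_d : Function.Exact (P.complex.d 2 1).hom (P.complex.d 1 0).hom :=
  (ShortComplex.ShortExact.moduleCat_exact_iff_function_exact _).1 (P.exact_succ 0)

lemma exists_mkQ_comp_eq_augmentation :
    ∃ ε : P.complex.X 0 →ₗ[R] F, N.mkQ ∘ₗ ε = augmentation P :=
  have : Module.Projective R (P.complex.X 0) := (IsProjective.iff_projective _).2 (P.projective 0)
  Module.projective_lifting_property N.mkQ (augmentation P) N.mkQ_surjective

/-- A lift of the augmentation of a projective resolution of `F ⧸ N` to `F`. -/
def augmentationLift : P.complex.X 0 →ₗ[R] F :=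
  (exists_mkQ_comp_eq_augmentation P).choose

lemma mkQ_augmentationLift (b : P.complex.X 0) :
    N.mkQ (augmentationLift P b) = augmentation P b :=
  LinearMap.congr_fun (exists_mkQ_comp_eq_augmentation P).choose_spec b

lemma augmentationLift_d_mem (r : P.complex.X 1) :
    augmentationLift P ((P.complex.d 1 0).hom r) ∈ N :=
  (Submodule.Quotient.mk_eq_zero N).1
    ((mkQ_augmentationLift P _).trans ((exact_d_augmentation P).apply_apply_eq_zero r))

/-- The map from the first syzygies of `F ⧸ N` to `N` induced by `augmentationLift`. -/
def syzygyToSubmodule : P.complex.X 1 →ₗ[R] N :=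
  (augmentationLift P ∘ₗ (P.complex.d 1 0).hom).codRestrict N (augmentationLift_d_mem P)

lemma exists_augmentation_comp_eq_mkQ [Module.Projective R F] :
    ∃ s : F →ₗ[R] P.complex.X 0, ∀ x, augmentation P (s x) = N.mkQ x :=
  (Module.projective_lifting_property (augmentation P) N.mkQ (augmentation_surjective P)).imp
    fun _ => LinearMap.congr_fun

end Augmentation

variable (P : ProjectiveResolution (ModuleCat.of R (F ⧸ N))) {M : ModuleCat.{u} R}

lemma comp_syzygyToSubmodule_mem_extCocycles (φ : N →ₗ[R] M) :
    ModuleCat.ofHom (φ ∘ₗ syzygyToSubmodule P) ∈ extCocycles R P 1 M := by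
  refine mem_extCocycles.2 (ModuleCat.hom_ext (LinearMap.ext fun r => ?_))
  have hd : syzygyToSubmodule P ((P.complex.d 2 1).hom r) = 0 :=
    Subtype.ext <| (congrArg (augmentationLift P) ((exact_d_d P).apply_apply_eq_zero r)).trans
      (map_zero (augmentationLift P))
  exact (congrArg φ hd).trans (map_zero φ)

/-- The connecting map `Hom(N, M) → Ext¹(F ⧸ N, M)` of `0 → N → F → F ⧸ N → 0`, computed with the
resolution `P` of `F ⧸ N`. -/
def connectingExt (φ : N →ₗ[R] M) :
    ((Ext R (ModuleCat.{u} R) 1).obj (op (ModuleCat.of R (F ⧸ N)))).obj M :=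
  extClass R P 1 M ⟨_, comp_syzygyToSubmodule_mem_extCocycles P φ⟩

lemma exists_comp_rangeRestrict_d_eq {z : P.complex.X 1 ⟶ M} (hz : z ∈ extCocycles R P 1 M) :
    ∃ Z : LinearMap.range (P.complex.d 1 0).hom →ₗ[R] M,
      ∀ a, Z ((P.complex.d 1 0).hom.rangeRestrict a) = z.hom a := by
  have hker : LinearMap.ker (P.complex.d 1 0).hom ≤ LinearMap.ker z.hom := by
    intro a ha
    obtain ⟨r, rfl⟩ := (exact_d_d P a).1 ha
    exact congrArg (fun f => f.hom r) (mem_extCocycles.1 hz)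
  refine ⟨Submodule.liftQ _ z.hom hker ∘ₗ (P.complex.d 1 0).hom.quotKerEquivRange.symm,
    fun a => ?_⟩
  have ha : (P.complex.d 1 0).hom.quotKerEquivRange.symm
      ((P.complex.d 1 0).hom.rangeRestrict a) = Submodule.Quotient.mk a := by
    rw [LinearEquiv.symm_apply_eq]
    rfl
  exact (congrArg (Submodule.liftQ _ z.hom hker) ha).trans (Submodule.liftQ_apply _ z.hom a)

lemma connectingExt_surjective [Module.Projective R F] :
    Function.Surjective (connectingExt P : (N →ₗ[R] M) → _) := by
  intro e
  obtain ⟨⟨z, hz⟩, rfl⟩ := extClass_surjective R P 1 M e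
  obtain ⟨Z, hZ⟩ := exists_comp_rangeRestrict_d_eq P hz
  obtain ⟨s, hs⟩ := exists_augmentation_comp_eq_mkQ P
  have hmem (b : P.complex.X 0) (hb : augmentation P b = 0) :
      b ∈ LinearMap.range (P.complex.d 1 0).hom := (exact_d_augmentation P b).1 hb
  let sN : N →ₗ[R] LinearMap.range (P.complex.d 1 0).hom :=
    (s ∘ₗ N.subtype).codRestrict _ fun x => hmem _ (by simp [hs])
  let sDefect : P.complex.X 0 →ₗ[R] LinearMap.range (P.complex.d 1 0).hom :=
    (LinearMap.id - s ∘ₗ augmentationLift P).codRestrict _ fun b => hmem _ (by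
      rw [LinearMap.sub_apply, map_sub, LinearMap.comp_apply, hs, mkQ_augmentationLift,
        LinearMap.id_apply, sub_self])
  refine ⟨Z ∘ₗ sN, Eq.symm (sub_eq_zero.1 ?_)⟩
  rw [connectingExt, ← map_sub, extClass_eq_zero_iff]
  refine ⟨ModuleCat.ofHom (Z ∘ₗ sDefect), ModuleCat.hom_ext (LinearMap.ext fun r => ?_)⟩
  change z.hom r - Z (sN (syzygyToSubmodule P r)) = Z (sDefect ((P.complex.d 1 0).hom r))
  rw [← hZ, ← map_sub]
  rfl

lemma connectingExt_eq_zero_iff [Module.Projective R F] {φ : N →ₗ[R] M} :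
    connectingExt P φ = 0 ↔ ∃ Φ : F →ₗ[R] M, ∀ x : N, φ x = Φ x := by
  rw [connectingExt, extClass_eq_zero_iff]
  constructor
  · rintro ⟨y, hy⟩
    obtain ⟨s, hs⟩ := exists_augmentation_comp_eq_mkQ P
    have hmem (x : F) : (augmentationLift P ∘ₗ s - LinearMap.id : F →ₗ[R] F) x ∈ N := by
      refine (Submodule.Quotient.mk_eq_zero N).1 (?_ : N.mkQ _ = 0)
      rw [LinearMap.sub_apply, map_sub, LinearMap.comp_apply, mkQ_augmentationLift, hs,
        LinearMap.id_apply, sub_self]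
    refine ⟨y.hom ∘ₗ s - φ ∘ₗ LinearMap.codRestrict N _ hmem, fun x => ?_⟩
    obtain ⟨r, hr⟩ := (exact_d_augmentation P (s x)).1 (by simp [hs])
    have hyx : φ (syzygyToSubmodule P r) = y.hom (s x) :=
      (congrArg (fun f => f.hom r) hy).trans (congrArg y.hom hr)
    rw [LinearMap.sub_apply, LinearMap.comp_apply, ← hyx, LinearMap.comp_apply, ← map_sub]
    congr 1
    ext
    simp [syzygyToSubmodule, hr]
  · rintro ⟨Φ, hΦ⟩
    exact ⟨ModuleCat.ofHom (Φ ∘ₗ augmentationLift P),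
      ModuleCat.hom_ext (LinearMap.ext fun r => hΦ (syzygyToSubmodule P r))⟩

lemma map_connectingExt (h : N' ≤ N) (P' : ProjectiveResolution (ModuleCat.of R (F ⧸ N')))
    (φ : N →ₗ[R] M) :
    ((Ext R (ModuleCat.{u} R) 1).map (ModuleCat.ofHom (Submodule.factor h)).op).app M
      (connectingExt P φ) = connectingExt P' (φ ∘ₗ Submodule.inclusion h) := by
  let f : ModuleCat.of R (F ⧸ N') ⟶ ModuleCat.of R (F ⧸ N) := ModuleCat.ofHom (Submodule.factor h)
  let g : P'.complex ⟶ P.complex := ProjectiveResolution.lift f P' P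
  have hg : g.f 0 ≫ P.π.f 0 = P'.π.f 0 ≫ f := ProjectiveResolution.lift_commutes_zero f P' P
  have hmem (b : P'.complex.X 0) :
      (augmentationLift P ∘ₗ (g.f 0).hom - augmentationLift P') b ∈ N := by
    have hgb : augmentation P ((g.f 0).hom b) = Submodule.factor h (augmentation P' b) :=
      congrArg (fun f => f.hom b) hg
    refine (Submodule.Quotient.mk_eq_zero N).1 (?_ : N.mkQ _ = 0)
    rw [LinearMap.sub_apply, map_sub, LinearMap.comp_apply, mkQ_augmentationLift, hgb,
      ← mkQ_augmentationLift, sub_eq_zero]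
    rfl
  have hz : g.f 1 ≫ ModuleCat.ofHom (φ ∘ₗ syzygyToSubmodule P) ∈ extCocycles R P' 1 M := by
    rw [mem_extCocycles, ← Category.assoc, ← g.comm, Category.assoc,
      mem_extCocycles.1 (comp_syzygyToSubmodule_mem_extCocycles P φ), Limits.comp_zero]
  refine (map_extClass f g hg (z' := ⟨_, hz⟩) rfl).trans (sub_eq_zero.1 ?_)
  rw [connectingExt, ← map_sub, extClass_eq_zero_iff]
  refine ⟨ModuleCat.ofHom (φ ∘ₗ LinearMap.codRestrict N _ hmem),
    ModuleCat.hom_ext (LinearMap.ext fun r => ?_)⟩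
  have hd : (P.complex.d 1 0).hom ((g.f 1).hom r) = (g.f 0).hom ((P'.complex.d 1 0).hom r) :=
    congrArg (fun f => f.hom r) (g.comm 1 0)
  change φ (syzygyToSubmodule P ((g.f 1).hom r)) -
    φ (Submodule.inclusion h (syzygyToSubmodule P' r)) =
      φ (LinearMap.codRestrict N _ hmem ((P'.complex.d 1 0).hom r))
  rw [← map_sub]
  congr 1
  ext
  simp [syzygyToSubmodule, hd]

end Connecting

section FirstLocalCohomology

open CategoryTheory Limits Opposite localCohomology

universe u

variable {R : Type u} [CommRing R] {𝔪 : Ideal R}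

/-- A linear map out of `𝔪 ^ k` agrees with multiplication by some element on a smaller power
of `𝔪`; equivalently, it dies in the colimit of the `Hom(𝔪 ^ l, M)` modulo `M`. -/
def IsEventuallySMul {M : Type*} [AddCommGroup M] [Module R M] {k : ℕ}
    (φ : ↥(𝔪 ^ k) →ₗ[R] M) : Prop :=
  ∃ (l : ℕ) (hkl : k ≤ l) (x : M), ∀ (r : R) (hr : r ∈ 𝔪 ^ l),
    φ ⟨r, Ideal.pow_le_pow_right hkl hr⟩ = r • x

lemma connectingExt_eq_zero_iff_exists_smul {J : Ideal R}
    (P : ProjectiveResolution (ModuleCat.of R (R ⧸ J))) {M : ModuleCat.{u} R} (φ : J →ₗ[R] M) :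
    connectingExt P φ = 0 ↔ ∃ x : M, ∀ r : J, φ r = (r : R) • x := by
  rw [connectingExt_eq_zero_iff]
  constructor
  · rintro ⟨Φ, hΦ⟩
    exact ⟨Φ 1, fun r => by rw [hΦ, ← map_smul, smul_eq_mul, mul_one]⟩
  · rintro ⟨x, hx⟩
    exact ⟨LinearMap.toSpanSingleton R M x, hx⟩

variable (𝔪) in
/-- The direct system `Ext¹(R ⧸ 𝔪 ^ k, M)` whose colimit is the first local cohomology of `M`. -/
abbrev extSystem (M : ModuleCat.{u} R) : (ℕᵒᵖ)ᵒᵖ ⥤ ModuleCat.{u} R :=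
  diagram (idealPowersDiagram 𝔪) 1 ⋙ (evaluation _ _).obj M

instance preservesColimit_extSystem_forget (M : ModuleCat.{u} R) :
    PreservesColimit (extSystem 𝔪 M) (forget (ModuleCat.{u} R)) :=
  have : PreservesFilteredColimitsOfSize.{0, 0} (forget (ModuleCat.{u} R)) :=
    preservesSmallestFilteredColimits_of_preservesFilteredColimits _
  inferInstance

variable (𝔪) in
/-- The cocone over `extSystem` with vertex the first local cohomology of `M`. -/
abbrev localCohomologyCocone (M : ModuleCat.{u} R) : Cocone (extSystem 𝔪 M) :=
  ((evaluation _ _).obj M).mapCocone (colimit.cocone (diagram (idealPowersDiagram 𝔪) 1))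

variable (𝔪) in
/-- Local cohomology is computed objectwise. -/
def localCohomologyIsColimit (M : ModuleCat.{u} R) : IsColimit (localCohomologyCocone 𝔪 M) :=
  isColimitOfPreserves _ (colimit.isColimit _)

lemma extSystem_map_connectingExt_eq_zero_iff {M : ModuleCat.{u} R} {k l : ℕ} (hkl : k ≤ l)
    (φ : ↥(𝔪 ^ k) →ₗ[R] M) :
    (extSystem 𝔪 M).map (homOfLE hkl).op.op (connectingExt (projectiveResolution _) φ) = 0 ↔
      ∃ x : M, ∀ (r : R) (hr : r ∈ 𝔪 ^ l), φ ⟨r, Ideal.pow_le_pow_right hkl hr⟩ = r • x :=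
  (Eq.congr_left
    (map_connectingExt _ (Ideal.pow_le_pow_right hkl) (projectiveResolution _) φ)).trans
    ((connectingExt_eq_zero_iff_exists_smul _ _).trans (exists_congr fun _ => Subtype.forall))

lemma ι_connectingExt_eq_zero_iff {M : ModuleCat.{u} R} {k : ℕ} (φ : ↥(𝔪 ^ k) →ₗ[R] M) :
    (localCohomologyCocone 𝔪 M).ι.app (op (op k)) (connectingExt (projectiveResolution _) φ) = 0 ↔
      IsEventuallySMul φ := by
  constructor
  · intro hφ
    obtain ⟨⟨⟨l⟩⟩, f, f', hff'⟩ := Concrete.isColimit_exists_of_rep_eq (extSystem 𝔪 M)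
      (localCohomologyIsColimit 𝔪 M) _ 0 (hφ.trans (map_zero _).symm)
    exact ⟨l, leOfHom f.unop.unop, (extSystem_map_connectingExt_eq_zero_iff _ φ).1
      (hff'.trans (map_zero _))⟩
  · rintro ⟨l, hkl, hφ⟩
    have hw := congrArg (fun f => f.hom (connectingExt (projectiveResolution _) φ))
      ((localCohomologyCocone 𝔪 M).w (homOfLE hkl).op.op)
    have hl := (extSystem_map_connectingExt_eq_zero_iff hkl φ).2 hφ
    exact hw.symm.trans ((congrArg ((localCohomologyCocone 𝔪 M).ι.app (op (op l))).hom hl).trans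
      (map_zero _))

variable (𝔪) in
theorem subsingleton_localCohomology_one_iff (M : ModuleCat.{u} R) :
    Subsingleton ((localCohomology 𝔪 1).obj M) ↔
      ∀ (k : ℕ) (φ : ↥(𝔪 ^ k) →ₗ[R] M), IsEventuallySMul φ := by
  constructor
  · intro _ k φ
    exact (ι_connectingExt_eq_zero_iff φ).1
      (Subsingleton.elim (α := (localCohomology 𝔪 1).obj M) _ _)
  · intro hM
    refine subsingleton_of_forall_eq 0 fun e => ?_
    obtain ⟨⟨⟨k⟩⟩, e, rfl⟩ := Concrete.isColimit_exists_rep _ (localCohomologyIsColimit 𝔪 M) e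
    obtain ⟨φ, rfl⟩ := connectingExt_surjective (projectiveResolution _) e
    exact (ι_connectingExt_eq_zero_iff φ).2 (hM k φ)

end FirstLocalCohomology

section DivByEdges

open Finsupp

/-- The monomial `x^c` is divisible by a product of `s` edges of `Γ`, i.e. lies in the `s`-th power
of the edge ideal. -/
def DivByEdges {σ : Type*} (Γ : SimpleGraph σ) : ℕ → (σ →₀ ℕ) → Prop
  | 0, _ => True
  | s + 1, c => ∃ i j c', Γ.Adj i j ∧ c = c' + single i 1 + single j 1 ∧ DivByEdges Γ s c'

lemma exists_eq_add_single_one {σ : Type*} {c : σ →₀ ℕ} {v : σ} (h : c v ≠ 0) :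
    ∃ c', c = c' + single v 1 :=
  ⟨c - single v 1, (tsub_add_cancel_of_le (single_le_iff.2 (Nat.one_le_iff_ne_zero.2 h))).symm⟩

namespace DivByEdges

section

variable {σ : Type*} {Γ : SimpleGraph σ} {s t : ℕ} {c d : σ →₀ ℕ} {i j v : σ}

lemma add_right (h : DivByEdges Γ s c) (d : σ →₀ ℕ) : DivByEdges Γ s (c + d) := by
  induction s generalizing c with
  | zero => trivial
  | succ s ih =>
    obtain ⟨i, j, c', hij, rfl, hc'⟩ := h
    exact ⟨i, j, c' + d, hij, by abel, ih hc'⟩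

lemma mono (h : DivByEdges Γ s c) (hcd : c ≤ d) : DivByEdges Γ s d := by
  obtain ⟨e, rfl⟩ := exists_add_of_le hcd
  exact h.add_right e

lemma of_succ (h : DivByEdges Γ (s + 1) c) : DivByEdges Γ s c := by
  obtain ⟨i, j, c', -, rfl, hc'⟩ := h
  exact (hc'.add_right _).add_right _

lemma anti (h : DivByEdges Γ t c) (hst : s ≤ t) : DivByEdges Γ s c := by
  induction hst with
  | refl => exact h
  | step _ ih => exact ih h.of_succ

lemma add_edge (h : DivByEdges Γ s c) (hij : Γ.Adj i j) :
    DivByEdges Γ (s + 1) (c + single i 1 + single j 1) := ⟨i, j, c, hij, rfl, h⟩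

lemma of_add_single (h : DivByEdges Γ (s + 1) (c + single v 1)) :
    DivByEdges Γ (s + 1) c ∨ ∃ u c', Γ.Adj v u ∧ c = c' + single u 1 ∧ DivByEdges Γ s c' := by
  classical
  induction s using Nat.strong_induction_on generalizing c with
  | _ s ih =>
  obtain ⟨i, j, c', hij, hc, hc'⟩ := h
  by_cases hi : i = v
  · subst hi
    exact .inr ⟨j, c', hij, add_right_cancel (hc.trans (add_right_comm _ _ _)), hc'⟩
  by_cases hj : j = v
  · subst hj
    exact .inr ⟨i, c', hij.symm, add_right_cancel hc, hc'⟩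
  obtain ⟨c'', rfl⟩ : ∃ c'', c' = c'' + single v 1 := by
    refine exists_eq_add_single_one fun hv => ?_
    simpa [single_apply, hi, hj, hv] using DFunLike.congr_fun hc v
  obtain rfl : c = c'' + single i 1 + single j 1 := add_right_cancel (hc.trans (by abel))
  obtain _ | s := s
  · exact .inl (add_edge (s := 0) trivial hij)
  rcases ih s s.lt_succ_self hc' with hdiv | ⟨u, d, hvu, rfl, hd⟩
  · exact .inl (hdiv.add_edge hij)
  · exact .inr ⟨u, d + single i 1 + single j 1, hvu, by abel, hd.add_edge hij⟩

lemma pred_of_add_single (h : DivByEdges Γ (s + 1) (c + single v 1)) : DivByEdges Γ s c := by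
  rcases h.of_add_single with hdiv | ⟨u, c', -, rfl, hc'⟩
  · exact hdiv.of_succ
  · exact hc'.add_right _

lemma of_add_single_of_le_apply_one (h : DivByEdges Γ s (c + single i 1)) (hc : s ≤ c i) :
    DivByEdges Γ s c := by
  induction s generalizing c with
  | zero => trivial
  | succ s ih =>
    rcases h.of_add_single with hdiv | ⟨u, c', hu, rfl, hc'⟩
    · exact hdiv
    have hci : s + 1 ≤ c' i := by simpa [hu.ne] using hc
    obtain ⟨d, rfl⟩ := exists_eq_add_single_one (c := c') (v := i) (by omega)
    have hd : DivByEdges Γ s d := ih hc' (by simpa using hci)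
    exact hd.add_edge hu

lemma of_add_single_of_le_apply {N : ℕ} (h : DivByEdges Γ s (c + single i N)) (hc : s ≤ c i) :
    DivByEdges Γ s c := by
  induction N with
  | zero => simpa using h
  | succ N ih =>
    refine ih (of_add_single_of_le_apply_one (i := i) ?_ ?_)
    · rwa [add_assoc, ← single_add]
    · rw [Finsupp.add_apply]
      exact hc.trans (Nat.le_add_right _ _)

lemma add_single_of_adj (h : DivByEdges Γ s c) (hc : s + 1 ≤ c i) (hiv : Γ.Adj i v) :
    DivByEdges Γ (s + 1) (c + single v 1) := by
  obtain ⟨d, rfl⟩ := exists_eq_add_single_one (c := c) (v := i) (by omega)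
  exact (h.of_add_single_of_le_apply (by simpa using hc)).add_edge hiv

/-- Use the edge at `v` in every step, paired with any other vertex in the support. -/
lemma of_forall_adj (hv : ∀ u, u ≠ v → Γ.Adj v u) (hsc : s ≤ c v) (hdeg : s + c v ≤ degree c) :
    DivByEdges Γ s c := by
  induction s generalizing c with
  | zero => trivial
  | succ s ih =>
    obtain ⟨u, huv, hcu⟩ : ∃ u, u ≠ v ∧ c u ≠ 0 := by
      by_contra! hc
      have hsingle : c = single v (c v) := by
        ext u
        by_cases huv : u = v
        · simp [huv]
        · simp [hc u huv, Ne.symm huv]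
      rw [hsingle, degree_single] at hdeg
      simp at hdeg
    obtain ⟨c, rfl⟩ := exists_eq_add_single_one hcu
    have hcv : s + 1 ≤ c v := by simpa [huv] using hsc
    obtain ⟨d, rfl⟩ := exists_eq_add_single_one (c := c) (v := v) (by omega)
    refine (ih ?_ ?_).add_edge (hv u huv)
    · simpa using hcv
    · simp only [Finsupp.coe_add, Pi.add_apply, single_eq_same, ne_eq, huv, not_false_eq_true,
        single_eq_of_ne', add_zero, map_add, degree_single] at hdeg
      omega

end

lemma not_single {σ : Type*} {Γ : SimpleGraph σ} (s N : ℕ) (v : σ) :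
    ¬DivByEdges Γ (s + 1) (single v N) := by
  rintro ⟨i, j, c, hij, hc, -⟩
  have hi : i = v := by
    by_contra hi
    simpa [Ne.symm hi, hij.ne'] using DFunLike.congr_fun hc i
  have hj : j = v := by
    by_contra hj
    simpa [Ne.symm hj, hij.ne] using DFunLike.congr_fun hc j
  exact hij.ne (hi.trans hj.symm)

end DivByEdges

end DivByEdges

section OddCycles

/-- The sequence `c 0, …, c m` is a closed walk of length `m` in `Γ`. -/
def IsClosedWalkSeq {σ : Type*} (Γ : SimpleGraph σ) (m : ℕ) (c : ℕ → σ) : Prop :=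
  c m = c 0 ∧ ∀ i < m, Γ.Adj (c i) (c (i + 1))

namespace IsClosedWalkSeq

lemma segment {σ : Type*} {Γ : SimpleGraph σ} {m i j : ℕ} {c : ℕ → σ}
    (h : IsClosedWalkSeq Γ m c) (hij : i ≤ j) (hjm : j ≤ m) (hc : c i = c j) :
    IsClosedWalkSeq Γ (j - i) fun l => c (i + l) :=
  ⟨by simp only [Nat.add_sub_cancel' hij, add_zero, hc], fun l _ => h.2 (i + l) (by omega)⟩

lemma excise {σ : Type*} {Γ : SimpleGraph σ} {m i j : ℕ} {c : ℕ → σ}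
    (h : IsClosedWalkSeq Γ m c) (hij : i ≤ j) (hjm : j < m) (hc : c i = c j) :
    IsClosedWalkSeq Γ (m - (j - i)) fun l => if l ≤ i then c l else c (l + (j - i)) := by
  refine ⟨?_, fun l hl => ?_⟩
  · simp only [show ¬m - (j - i) ≤ i by omega, if_false, Nat.zero_le, if_true]
    rw [Nat.sub_add_cancel (by omega), h.1]
  beta_reduce
  rcases lt_trichotomy l i with hli | rfl | hil
  · rw [if_pos hli.le, if_pos (Nat.succ_le_of_lt hli)]
    exact h.2 l (by omega)
  · rw [if_pos le_rfl, if_neg l.lt_succ_self.not_ge, hc, show l + 1 + (j - l) = j + 1 by omega]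
    exact h.2 j hjm
  · rw [if_neg (by omega), if_neg (by omega), add_right_comm]
    exact h.2 _ (by omega)

lemma isOddCycle {σ : Type} {Γ : SimpleGraph σ} {m : ℕ} {c : ℕ → σ} (h : IsClosedWalkSeq Γ m c)
    (hm : Odd m) (hinj : Set.InjOn c (Set.Iio m)) : IsOddCycle Γ m fun z => c z.val := by
  have hm1 : m ≠ 1 := by
    rintro rfl
    exact (h.2 0 one_pos).ne h.1.symm
  have hm3 : 3 ≤ m := by
    obtain ⟨r, rfl⟩ := hm
    omega
  have : NeZero m := ⟨by omega⟩
  have : Fact (1 < m) := ⟨by omega⟩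
  refine ⟨hm, hm3, fun x y hxy => ZMod.val_injective m (hinj x.val_lt y.val_lt hxy), fun z => ?_⟩
  beta_reduce
  rw [ZMod.val_add, ZMod.val_one]
  rcases (Nat.succ_le_of_lt z.val_lt).lt_or_eq with hlt | heq
  · rw [Nat.mod_eq_of_lt hlt]
    exact h.2 _ z.val_lt
  · have hadj := h.2 _ z.val_lt
    rw [show z.val + 1 = m from heq] at hadj ⊢
    rwa [Nat.mod_self, ← h.1]

lemma exists_isOddCycle {σ : Type} {Γ : SimpleGraph σ} {m : ℕ} {c : ℕ → σ}
    (h : IsClosedWalkSeq Γ m c) (hm : Odd m) : ∃ m' d, IsOddCycle Γ m' d := by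
  induction m using Nat.strong_induction_on generalizing c with
  | _ m ih =>
  by_cases hinj : Set.InjOn c (Set.Iio m)
  · exact ⟨m, _, h.isOddCycle hm hinj⟩
  obtain ⟨i, j, hij, hjm, hc⟩ : ∃ i j, i < j ∧ j < m ∧ c i = c j := by
    simp only [Set.InjOn, not_forall] at hinj
    obtain ⟨i, hi, j, hj, hc, hne⟩ := hinj
    rcases Ne.lt_or_gt hne with hlt | hlt
    · exact ⟨i, j, hlt, hj, hc⟩
    · exact ⟨j, i, hlt, hi, hc.symm⟩
  rcases Nat.even_or_odd (j - i) with heven | hodd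
  · exact ih _ (by omega) (h.excise hij.le hjm hc) (Nat.Odd.sub_even (by omega) hm heven)
  · exact ih _ (by omega) (h.segment hij.le hjm.le hc) hodd

end IsClosedWalkSeq

theorem two_colorable_of_forall_not_isOddCycle {σ : Type} {Γ : SimpleGraph σ}
    (h : ∀ m c, ¬IsOddCycle Γ m c) : Γ.Colorable 2 := by
  rw [SimpleGraph.two_colorable_iff_forall_loop_even]
  intro u w
  by_contra hw
  obtain ⟨m, c, hc⟩ := IsClosedWalkSeq.exists_isOddCycle (Γ := Γ) (c := w.getVert)
    ⟨by simp, fun l hl => w.adj_getVert_succ hl⟩ (Nat.not_even_iff_odd.1 hw)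
  exact h m c hc

/-- An odd cycle in the complement of `N[i]` would fail to dominate `i`. -/
theorem two_colorable_induce_compl_closedNbhd {σ : Type} {Γ : SimpleGraph σ}
    (hdom : ∀ m c, IsOddCycle Γ m c → Dominating Γ (Set.range c)) (i : σ) :
    (Γ.induce (closedNbhd Γ i)ᶜ).Colorable 2 := by
  refine two_colorable_of_forall_not_isOddCycle fun m c ⟨hodd, hm, hinj, hadj⟩ => ?_
  have hcycle : IsOddCycle Γ m (Subtype.val ∘ c) :=
    ⟨hodd, hm, Subtype.val_injective.comp hinj, hadj⟩
  obtain ⟨_, ⟨z, rfl⟩, hz⟩ := hdom m _ hcycle i <| by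
    rintro ⟨z, hz⟩
    exact (c z).2 (.inl hz)
  exact (c z).2 (.inr hz.symm)

end OddCycles

section DegreeComplex

open Finsupp

variable {σ : Type} {Γ : SimpleGraph σ}

lemma mem_compl_closedNbhd {i v : σ} : v ∈ (closedNbhd Γ i)ᶜ ↔ v ≠ i ∧ ¬Γ.Adj i v := by
  simp [closedNbhd]

namespace DivByEdges

variable {s : ℕ} {i : σ}

/-- If the edge used at `v` ends in a neighbour `u` of `i`, then the edge `iu` can replace it. -/
lemma of_add_single_of_mem_compl {c : σ →₀ ℕ} {v : σ} (hv : v ∈ (closedNbhd Γ i)ᶜ)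
    (hci : s + 1 ≤ c i) (h : DivByEdges Γ (s + 1) (c + single v 1)) :
    DivByEdges Γ (s + 1) c ∨
      ∃ u ∈ (closedNbhd Γ i)ᶜ, ∃ c', Γ.Adj v u ∧ c = c' + single u 1 ∧ DivByEdges Γ s c' := by
  rcases h.of_add_single with hc | ⟨u, c', hvu, rfl, hdiv⟩
  · exact .inl hc
  have hui : u ≠ i := by
    rintro rfl
    exact (mem_compl_closedNbhd.1 hv).2 hvu.symm
  by_cases hiu : Γ.Adj i u
  · exact .inl (hdiv.add_single_of_adj (by simpa [hui] using hci) hiu)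
  · exact .inr ⟨u, mem_compl_closedNbhd.2 ⟨hui, hiu⟩, c', hvu, rfl, hdiv⟩

/-- Follow an alternating path starting at `p`. It stays in the bipartite graph `Γ - N[i]`, where it
cannot end in `q` because it visits the color class of `p` and `q` only at even steps. -/
lemma exchange (C : (Γ.induce (closedNbhd Γ i)ᶜ).Coloring Bool) {m : σ →₀ ℕ}
    {p q : ↥(closedNbhd Γ i)ᶜ} (hpq : C p = C q) (hmi : s + 1 ≤ m i) (hm : DivByEdges Γ s m)
    (h : DivByEdges Γ (s + 1) (m + single q.1 1 + single p.1 1)) :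
    DivByEdges Γ (s + 1) (m + single p.1 1) ∨ DivByEdges Γ (s + 1) (m + single q.1 1) := by
  induction s using Nat.strong_induction_on generalizing m p with
  | _ s ih =>
  rcases h.of_add_single_of_mem_compl p.2 (by simpa using hmi.trans (Nat.le_add_right _ _)) with
    hq | ⟨v, hv, c, hpv, hc, hdiv⟩
  · exact .inr hq
  have hCpv : C p ≠ C ⟨v, hv⟩ := C.valid hpv
  have hvq : v ≠ q := by
    rintro rfl
    exact hCpv hpq
  obtain ⟨m, rfl⟩ : ∃ m', m = m' + single v 1 := by
    refine exists_eq_add_single_one fun hmv => ?_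
    simpa [hmv, hvq] using DFunLike.congr_fun hc v
  obtain rfl : c = m + single q.1 1 := add_right_cancel (hc.symm.trans (add_right_comm _ _ _))
  have hp_of (hms : DivByEdges Γ s m) :
      DivByEdges Γ (s + 1) (m + single v 1 + single p.1 1) := hms.add_edge hpv.symm
  obtain _ | s := s
  · exact .inl (hp_of trivial)
  have hmi' : s + 1 < m i := by simpa [(mem_compl_closedNbhd.1 hv).1] using hmi
  rcases hm.of_add_single_of_mem_compl hv (by omega) with hms | ⟨u, hu, m, hvu, rfl, hms⟩
  · exact .inl (hp_of hms)
  have hmi'' : s + 1 < m i := by simpa [(mem_compl_closedNbhd.1 hu).1] using hmi'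
  have hCvu : C ⟨v, hv⟩ ≠ C ⟨u, hu⟩ := C.valid hvu
  have hCuq : C ⟨u, hu⟩ = C q := by
    rw [← hpq, Bool.eq_not.2 hCpv, Bool.not_eq.2 hCvu]
  rcases ih s s.lt_succ_self hCuq (by omega) hms (by rwa [add_right_comm]) with hu' | hq'
  · exact .inl (hp_of hu')
  · refine .inr ?_
    convert hq'.add_edge hvu using 1
    abel

lemma add_single_one_of_add_single (C : (Γ.induce (closedNbhd Γ i)ᶜ).Coloring Bool) {m : σ →₀ ℕ}
    {p : σ} (hp : p ∈ (closedNbhd Γ i)ᶜ) (hmi : s + 1 ≤ m i) (hm : DivByEdges Γ s m) {N : ℕ}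
    (h : DivByEdges Γ (s + 1) (m + single p N)) : DivByEdges Γ (s + 1) (m + single p 1) := by
  induction N with
  | zero => exact (by simpa using h : DivByEdges Γ (s + 1) m).add_right _
  | succ N ih =>
    obtain _ | N := N
    · exact h
    have hmi' : s + 1 ≤ (m + single p N) i := hmi.trans (Nat.le_add_right _ _)
    have hexch := exchange C (p := ⟨p, hp⟩) (q := ⟨p, hp⟩) rfl hmi' (hm.add_right _)
      (by simpa only [add_assoc, ← single_add] using h)
    exact ih (by simpa only [or_self, add_assoc, ← single_add] using hexch)

lemma exists_mem_closedNbhd_forall_not_add_single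
    (C : (Γ.induce (closedNbhd Γ i)ᶜ).Coloring Bool) {c : σ →₀ ℕ} (hci : s + 1 ≤ c i)
    (hs : DivByEdges Γ s c) (hs' : ¬DivByEdges Γ (s + 1) c) (w : σ) :
    ∃ f ∈ closedNbhd Γ w, ∀ N, ¬DivByEdges Γ (s + 1) (c + single f N) := by
  by_cases hw : w ∈ (closedNbhd Γ i)ᶜ
  swap
  · refine ⟨i, ?_, fun N hN => hs' (hN.of_add_single_of_le_apply hci)⟩
    rcases not_not.1 hw with rfl | hiw
    · exact .inl rfl
    · exact .inr hiw.symm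
  by_cases hcw : DivByEdges Γ (s + 1) (c + single w 1)
  swap
  · exact ⟨w, .inl rfl, fun N hN => hcw (add_single_one_of_add_single C hw hci hs hN)⟩
  rcases hcw.of_add_single_of_mem_compl hw hci with hc | ⟨u, hu, c, hwu, rfl, hc⟩
  · exact absurd hc hs'
  refine ⟨u, .inr hwu, fun N hN => hs' (add_single_one_of_add_single C hu ?_ hc (N := 1 + N) ?_)⟩
  · simpa [(mem_compl_closedNbhd.1 hu).1] using hci
  · rwa [add_assoc, ← single_add] at hN

end DivByEdges

/-- `{i}` is a vertex of the degree complex of `I(Γ)^t` at the exponent `a`: no monomial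
`x^a x_i^N` lies in `I(Γ)^t`. -/
def IsDegreeVertex {σ : Type*} (Γ : SimpleGraph σ) (t : ℕ) (a : σ →₀ ℕ) (i : σ) : Prop :=
  ∀ N, ¬DivByEdges Γ t (a + single i N)

/-- `{i, j}` is a face of the degree complex of `I(Γ)^t` at the exponent `a`: no monomial
`x^a x_i^M x_j^N` lies in `I(Γ)^t`. Here `i = j` is allowed. -/
def IsDegreeEdge {σ : Type*} (Γ : SimpleGraph σ) (t : ℕ) (a : σ →₀ ℕ) (i j : σ) : Prop :=
  ∀ M N, ¬DivByEdges Γ t (a + single i M + single j N)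

lemma IsDegreeEdge.right {σ : Type*} {Γ : SimpleGraph σ} {t : ℕ} {a : σ →₀ ℕ} {i j : σ}
    (h : IsDegreeEdge Γ t a i j) : IsDegreeVertex Γ t a j :=
  fun N => by simpa using h 0 N

theorem IsDegreeVertex.exists_mem_closedNbhd_isDegreeEdge {t : ℕ} {a : σ →₀ ℕ} {i : σ}
    (h : IsDegreeVertex Γ t a i) (hcol : (Γ.induce (closedNbhd Γ i)ᶜ).Colorable 2) (w : σ) :
    ∃ f ∈ closedNbhd Γ w, IsDegreeEdge Γ t a i f := by
  classical
  have hex : ∃ s, ¬DivByEdges Γ s (a + single i t) := ⟨t, h t⟩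
  obtain ⟨s, hs⟩ : ∃ s, Nat.find hex = s + 1 :=
    Nat.exists_eq_succ_of_ne_zero fun h0 => Nat.find_spec hex (h0 ▸ trivial)
  have hst : s + 1 ≤ t := hs ▸ Nat.find_min' hex (h t)
  have hdiv : DivByEdges Γ s (a + single i t) := not_not.1 (Nat.find_min hex (by omega))
  have hndiv : ¬DivByEdges Γ (s + 1) (a + single i t) := hs ▸ Nat.find_spec hex
  obtain ⟨f, hf, hfN⟩ := DivByEdges.exists_mem_closedNbhd_forall_not_add_single
    (hcol.toColoring (by simp)) (by rw [Finsupp.add_apply, single_eq_same]; omega) hdiv hndiv w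
  refine ⟨f, hf, fun M N hMN => hfN N ?_⟩
  have hray : DivByEdges Γ (s + 1) (a + single i t + single f N + single i M) := by
    convert (hMN.anti hst).add_right (single i t) using 1
    abel
  refine hray.of_add_single_of_le_apply (hst.trans ?_)
  simp only [Finsupp.add_apply, single_eq_same]
  omega

end DegreeComplex

section Coefficients

open Finsupp

variable {K σ : Type} [Field K] {Γ : SimpleGraph σ} {k t : ℕ}

lemma edgeIdeal_pow_eq_span (t : ℕ) :
    edgeIdeal K Γ ^ t = Ideal.span ((monomial · 1) '' {c | DivByEdges Γ t c}) := by
  induction t with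
  | zero =>
    rw [pow_zero, Ideal.one_eq_top, eq_comm, Ideal.eq_top_iff_one]
    exact Ideal.subset_span ⟨0, trivial, rfl⟩
  | succ t ih =>
    rw [pow_succ, ih, edgeIdeal, Ideal.span_mul_span']
    congr 1
    ext p
    rw [Set.mem_mul]
    constructor
    · rintro ⟨_, ⟨c, hc, rfl⟩, _, ⟨i, j, hij, rfl⟩, rfl⟩
      exact ⟨c + single i 1 + single j 1, hc.add_edge hij, by simp [X, monomial_mul, add_assoc]⟩
    · rintro ⟨_, ⟨i, j, c, hij, rfl, hc⟩, rfl⟩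
      exact ⟨_, ⟨c, hc, rfl⟩, _, ⟨i, j, hij, rfl⟩, by simp [X, monomial_mul, add_assoc]⟩

lemma mem_edgeIdeal_pow_iff {p : MvPolynomial σ K} :
    p ∈ edgeIdeal K Γ ^ t ↔ ∀ c, ¬DivByEdges Γ t c → coeff c p = 0 := by
  rw [edgeIdeal_pow_eq_span, mem_ideal_span_monomial_image]
  constructor
  · intro h c hc
    by_contra hpc
    obtain ⟨d, hd, hdc⟩ := h c (MvPolynomial.mem_support_iff.2 hpc)
    exact hc (DivByEdges.mono hd hdc)
  · intro h c hc
    exact ⟨c, by_contra fun hdiv => MvPolynomial.mem_support_iff.1 hc (h c hdiv), le_rfl⟩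

lemma mk_eq_mk_iff_coeff {p q : MvPolynomial σ K} :
    Ideal.Quotient.mk (edgeIdeal K Γ ^ t) p = Ideal.Quotient.mk (edgeIdeal K Γ ^ t) q ↔
      ∀ c, ¬DivByEdges Γ t c → coeff c p = coeff c q := by
  simp only [Ideal.Quotient.eq, mem_edgeIdeal_pow_iff, coeff_sub, sub_eq_zero]

lemma monomial_one_mem_maxIdeal_pow_iff {b : σ →₀ ℕ} :
    monomial b 1 ∈ maxIdeal K σ ^ k ↔ k ≤ degree b :=
  monomial_mem_pow_idealOfVars_iff k b one_ne_zero

/-- The coefficient of `x^c` in a class of `R ⧸ I(Γ)^t`, read off from an arbitrary representative.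
It is independent of this choice, hence meaningful, precisely when `x^c ∉ I(Γ)^t`. -/
def quotCoeff (c : σ →₀ ℕ) (x : MvPolynomial σ K ⧸ edgeIdeal K Γ ^ t) : K :=
  coeff c x.out

lemma quotCoeff_mk {c : σ →₀ ℕ} (hc : ¬DivByEdges Γ t c) (p : MvPolynomial σ K) :
    quotCoeff c (Ideal.Quotient.mk (edgeIdeal K Γ ^ t) p) = coeff c p :=
  mk_eq_mk_iff_coeff.1 (Ideal.Quotient.mk_out _) c hc

lemma eq_iff_quotCoeff {x y : MvPolynomial σ K ⧸ edgeIdeal K Γ ^ t} :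
    x = y ↔ ∀ c, ¬DivByEdges Γ t c → quotCoeff c x = quotCoeff c y := by
  rw [← Ideal.Quotient.mk_out x, ← Ideal.Quotient.mk_out y, mk_eq_mk_iff_coeff]
  exact forall₂_congr fun c hc => by rw [quotCoeff_mk hc, quotCoeff_mk hc]

lemma quotCoeff_monomial_smul {c : σ →₀ ℕ} (hc : ¬DivByEdges Γ t c) (d : σ →₀ ℕ)
    (x : MvPolynomial σ K ⧸ edgeIdeal K Γ ^ t) :
    quotCoeff c (monomial d (1 : K) • x) = if d ≤ c then quotCoeff (c - d) x else 0 := by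
  obtain ⟨p, rfl⟩ := Ideal.Quotient.mk_surjective x
  have hsmul : monomial d (1 : K) • Ideal.Quotient.mk (edgeIdeal K Γ ^ t) p =
      Ideal.Quotient.mk _ (monomial d 1 * p) := rfl
  rw [hsmul, quotCoeff_mk hc, coeff_monomial_mul', one_mul]
  split_ifs with hdc
  · rw [quotCoeff_mk fun h => hc (h.mono tsub_le_self)]
  · rfl

/-- The coefficient of `x^c` in `φ (x^b)`, for a linear map `φ` from a power of the maximal ideal to
`R ⧸ I(Γ)^t`; the junk value is `0` when `x^b` is not in the domain of `φ`. -/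
def homCoeff (φ : ↥(maxIdeal K σ ^ k) →ₗ[MvPolynomial σ K] MvPolynomial σ K ⧸ edgeIdeal K Γ ^ t)
    (b c : σ →₀ ℕ) : K :=
  open Classical in if hb : k ≤ degree b then
    quotCoeff c (φ ⟨monomial b 1, monomial_one_mem_maxIdeal_pow_iff.2 hb⟩) else 0

variable {φ : ↥(maxIdeal K σ ^ k) →ₗ[MvPolynomial σ K] MvPolynomial σ K ⧸ edgeIdeal K Γ ^ t}
  {b c d : σ →₀ ℕ}

lemma homCoeff_eq_quotCoeff (hb : k ≤ degree b) (c : σ →₀ ℕ) :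
    homCoeff φ b c = quotCoeff c (φ ⟨monomial b 1, monomial_one_mem_maxIdeal_pow_iff.2 hb⟩) :=
  dif_pos hb

lemma homCoeff_add (hb : k ≤ degree b) (hc : ¬DivByEdges Γ t c) :
    homCoeff φ (b + d) c = if d ≤ c then homCoeff φ b (c - d) else 0 := by
  have hbd : k ≤ degree (b + d) := by
    rw [map_add]
    omega
  have hsmul : (⟨monomial (b + d) 1, monomial_one_mem_maxIdeal_pow_iff.2 hbd⟩ :
      ↥(maxIdeal K σ ^ k)) =
        monomial d (1 : K) • ⟨monomial b 1, monomial_one_mem_maxIdeal_pow_iff.2 hb⟩ :=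
    Subtype.ext (by simp [monomial_mul, add_comm])
  rw [homCoeff_eq_quotCoeff hbd, hsmul, map_smul, quotCoeff_monomial_smul hc,
    homCoeff_eq_quotCoeff hb]

lemma homCoeff_add_add (hb : k ≤ degree b) (hc : ¬DivByEdges Γ t (c + d)) :
    homCoeff φ (b + d) (c + d) = homCoeff φ b c := by
  rw [homCoeff_add hb hc, if_pos le_add_self, add_tsub_cancel_right]

lemma homCoeff_add_of_not_le (hb : k ≤ degree b) (hc : ¬DivByEdges Γ t c) (hdc : ¬d ≤ c) :
    homCoeff φ (b + d) c = 0 := by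
  rw [homCoeff_add hb hc, if_neg hdc]

lemma forall_map_eq_smul_of_monomial {l : ℕ} (hkl : k ≤ l) {M : Type*} [AddCommGroup M]
    [Module (MvPolynomial σ K) M] {φ : ↥(maxIdeal K σ ^ k) →ₗ[MvPolynomial σ K] M} {x : M}
    (h : ∀ b (hb : l ≤ degree b),
      φ ⟨monomial b 1, monomial_one_mem_maxIdeal_pow_iff.2 (hkl.trans hb)⟩ =
        monomial b (1 : K) • x) (r : MvPolynomial σ K) (hr : r ∈ maxIdeal K σ ^ l) :
    φ ⟨r, Ideal.pow_le_pow_right hkl hr⟩ = r • x := by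
  suffices h' : ∃ hr : r ∈ maxIdeal K σ ^ k, φ ⟨r, hr⟩ = r • x from h'.2
  have hspan : maxIdeal K σ ^ l = .span ((monomial · 1) '' (degree ⁻¹' {l})) :=
    pow_idealOfVars_eq_span l
  rw [hspan] at hr
  induction hr using Submodule.span_induction with
  | mem _ hb =>
    obtain ⟨b, hb, rfl⟩ := hb
    exact ⟨_, h b hb.ge⟩
  | zero => exact ⟨zero_mem _, by rw [zero_smul]; exact map_zero φ⟩
  | add p q _ _ hp hq =>
    obtain ⟨⟨hp, hφp⟩, hq, hφq⟩ := And.intro hp hq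
    refine ⟨add_mem hp hq, ?_⟩
    rw [add_smul, ← hφp, ← hφq]
    exact φ.map_add ⟨p, hp⟩ ⟨q, hq⟩
  | smul a p _ hp =>
    obtain ⟨hp, hφp⟩ := hp
    refine ⟨Submodule.smul_mem _ a hp, ?_⟩
    rw [smul_assoc, ← hφp]
    exact φ.map_smul a ⟨p, hp⟩

lemma map_monomial_eq_smul_mk_iff_homCoeff (hb : k ≤ degree b) (y : MvPolynomial σ K) :
    φ ⟨monomial b 1, monomial_one_mem_maxIdeal_pow_iff.2 hb⟩ =
        monomial b (1 : K) • Ideal.Quotient.mk _ y ↔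
      ∀ c, ¬DivByEdges Γ t c → homCoeff φ b c = if b ≤ c then coeff (c - b) y else 0 := by
  rw [eq_iff_quotCoeff]
  refine forall₂_congr fun c hc => ?_
  rw [homCoeff_eq_quotCoeff hb, quotCoeff_monomial_smul hc,
    quotCoeff_mk fun h => hc (h.mono tsub_le_self)]

theorem isEventuallySMul_iff_homCoeff :
    IsEventuallySMul φ ↔ ∃ l ≥ k, ∃ y : MvPolynomial σ K, ∀ b c, l ≤ degree b →
      ¬DivByEdges Γ t c → homCoeff φ b c = if b ≤ c then coeff (c - b) y else 0 := by
  constructor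
  · rintro ⟨l, hkl, x, hx⟩
    obtain ⟨y, rfl⟩ := Ideal.Quotient.mk_surjective x
    exact ⟨l, hkl, y, fun b c hb => (map_monomial_eq_smul_mk_iff_homCoeff (hkl.trans hb) y).1
      (hx _ (monomial_one_mem_maxIdeal_pow_iff.2 hb)) c⟩
  · rintro ⟨l, hkl, y, hy⟩
    exact ⟨l, hkl, Ideal.Quotient.mk _ y, forall_map_eq_smul_of_monomial hkl fun b hb =>
      (map_monomial_eq_smul_mk_iff_homCoeff (hkl.trans hb) y).2 fun c => hy b c hb⟩

end Coefficients

section DominatingVertex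

open Finsupp

variable {K σ : Type} [Field K] {Γ : SimpleGraph σ} {t : ℕ} {v : σ}

/-- Drop all terms of `p` not divisible by `x_v^(t+1)` and divide the remaining ones by `x_v`. -/
def divVar (v : σ) (t : ℕ) (p : MvPolynomial σ K) : MvPolynomial σ K :=
  monomial (single v t) 1 * p.divMonomial (single v (t + 1))

lemma coeff_divVar (v : σ) (t : ℕ) (p : MvPolynomial σ K) (c : σ →₀ ℕ) :
    coeff c (divVar v t p) = if t ≤ c v then coeff (c + single v 1) p else 0 := by
  rw [divVar, coeff_monomial_mul', one_mul, coeff_divMonomial]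
  refine ite_congr (propext single_le_iff) (fun hcv => ?_) fun _ => rfl
  rw [single_add, add_right_comm, add_tsub_cancel_of_le (single_le_iff.2 hcv)]

lemma divVar_add (v : σ) (t : ℕ) (p q : MvPolynomial σ K) :
    divVar v t (p + q) = divVar v t p + divVar v t q := by
  ext c
  simp only [coeff_add, coeff_divVar]
  split_ifs <;> simp

lemma degree_add_apply_le_of_le {c d : σ →₀ ℕ} (hcd : c ≤ d) (v : σ) :
    degree c + d v ≤ degree d + c v := by
  obtain ⟨e, rfl⟩ := exists_add_of_le hcd
  have hev : e v ≤ degree e := le_degree v e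
  simp only [map_add, Finsupp.add_apply]
  omega

lemma lt_apply_of_coeff_ne_zero (hv : ∀ u, u ≠ v → Γ.Adj v u) {p : MvPolynomial σ K}
    (hp : p ∈ maxIdeal K σ ^ (2 * t)) {c e : σ →₀ ℕ} (hc : ¬DivByEdges Γ t c) (hcv : t ≤ c v)
    (hec : e ≤ c + single v 1) (hpe : coeff e p ≠ 0) : t < e v := by
  have hdeg_c : degree c < t + c v := lt_of_not_ge fun h => hc (.of_forall_adj hv hcv h)
  have hdeg_e : 2 * t ≤ degree e :=
    (mem_pow_idealOfVars_iff _ p).1 hp e (MvPolynomial.mem_support_iff.2 hpe)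
  have hle := degree_add_apply_le_of_le hec v
  simp only [map_add, Finsupp.add_apply, single_eq_same, degree_single] at hle
  omega

lemma coeff_divVar_monomial_mul (hv : ∀ u, u ≠ v → Γ.Adj v u) {p : MvPolynomial σ K}
    (hp : p ∈ maxIdeal K σ ^ (2 * t)) {c : σ →₀ ℕ} (hc : ¬DivByEdges Γ t c) (d : σ →₀ ℕ) (a : K) :
    coeff c (divVar v t (monomial d a * p)) = coeff c (monomial d a * divVar v t p) := by
  rw [coeff_divVar, coeff_monomial_mul', coeff_monomial_mul', coeff_divVar]
  by_cases hcv : t ≤ c v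
  swap
  · rw [if_neg hcv, if_neg (c := t ≤ (c - d) v) (by rw [Finsupp.tsub_apply]; omega), mul_zero,
      ite_self]
  by_cases hd : d ≤ c + single v 1
  swap
  · rw [if_neg hd, ite_self, if_neg fun h => hd (h.trans le_self_add)]
  rw [if_pos hcv, if_pos hd]
  by_cases hp0 : coeff (c + single v 1 - d) p = 0
  · rw [hp0, mul_zero]
    split_ifs with hdc
    · rw [tsub_add_eq_add_tsub hdc, hp0, mul_zero]
    · rw [mul_zero]
    · rfl
  have hlt := lt_apply_of_coeff_ne_zero hv hp hc hcv tsub_le_self hp0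
  simp only [Finsupp.tsub_apply, Finsupp.add_apply, single_eq_same] at hlt
  have hdc : d ≤ c := fun u => by
    by_cases huv : u = v
    · subst huv
      omega
    · simpa [huv] using hd u
  rw [if_pos hdc, if_pos (by rw [Finsupp.tsub_apply]; omega), tsub_add_eq_add_tsub hdc]

lemma mk_divVar_mul (hv : ∀ u, u ≠ v → Γ.Adj v u) {p : MvPolynomial σ K}
    (hp : p ∈ maxIdeal K σ ^ (2 * t)) (r : MvPolynomial σ K) :
    Ideal.Quotient.mk (edgeIdeal K Γ ^ t) (divVar v t (r * p)) =
      Ideal.Quotient.mk (edgeIdeal K Γ ^ t) (r * divVar v t p) := by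
  induction r using MvPolynomial.induction_on' with
  | monomial d a => exact mk_eq_mk_iff_coeff.2 fun c hc => coeff_divVar_monomial_mul hv hp hc d a
  | add r q hr hq => rw [add_mul, add_mul, divVar_add, map_add, map_add, hr, hq]

/-- Division by a variable `x_v`, as a map to `R ⧸ I(Γ)^t`; it is linear over the polynomial ring
because `v` is adjacent to all other vertices. -/
def divVarHom (K : Type) [Field K] (t : ℕ) (hv : ∀ u, u ≠ v → Γ.Adj v u) :
    ↥(maxIdeal K σ ^ (2 * t)) →ₗ[MvPolynomial σ K] MvPolynomial σ K ⧸ edgeIdeal K Γ ^ t where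
  toFun p := Ideal.Quotient.mk _ (divVar v t p.1)
  map_add' p q := by rw [Submodule.coe_add, divVar_add, map_add]
  map_smul' r p := mk_divVar_mul hv p.2 r

theorem not_isEventuallySMul_divVarHom (hv : ∀ u, u ≠ v → Γ.Adj v u) :
    ¬IsEventuallySMul (divVarHom K (t + 1) hv) := by
  classical
  rw [isEventuallySMul_iff_homCoeff]
  rintro ⟨l, hkl, y, hy⟩
  have hdeg : l ≤ degree (single v (l + 1)) := by simp
  have hdiv : ¬DivByEdges Γ (t + 1) (single v l) := DivByEdges.not_single t l v
  have hone : homCoeff (divVarHom K (t + 1) hv) (single v (l + 1)) (single v l) = 1 := by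
    rw [homCoeff_eq_quotCoeff (hkl.trans hdeg), divVarHom]
    refine (quotCoeff_mk hdiv _).trans ?_
    rw [coeff_divVar, single_eq_same, if_pos (by omega), ← single_add, coeff_monomial, if_pos rfl]
  have hzero := hy _ _ hdeg hdiv
  rw [hone, if_neg (by simp)] at hzero
  exact one_ne_zero hzero

end DominatingVertex

section Gluing

open Finsupp

variable {K σ : Type} [Field K] {Γ : SimpleGraph σ} {k t : ℕ} {i j : σ} {a c : σ →₀ ℕ}

/-- Multiplication by the edge monomial `x_i x_j`, as a map `R ⧸ I(Γ)^t → R ⧸ I(Γ)^(t+1)`. -/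
def mulEdge (K : Type) [Field K] (t : ℕ) (hij : Γ.Adj i j) :
    (MvPolynomial σ K ⧸ edgeIdeal K Γ ^ t) →ₗ[MvPolynomial σ K]
      MvPolynomial σ K ⧸ edgeIdeal K Γ ^ (t + 1) :=
  Submodule.mapQ (edgeIdeal K Γ ^ t) (edgeIdeal K Γ ^ (t + 1))
    (LinearMap.mulLeft (MvPolynomial σ K) (X i * X j)) fun p hp => by
      rw [Submodule.mem_comap, LinearMap.mulLeft_apply, mul_comm, pow_succ]
      exact Ideal.mul_mem_mul hp (Ideal.subset_span ⟨i, j, hij, rfl⟩)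

variable {φ : ↥(maxIdeal K σ ^ k) →ₗ[MvPolynomial σ K] MvPolynomial σ K ⧸ edgeIdeal K Γ ^ t}

lemma quotCoeff_mulEdge (hij : Γ.Adj i j)
    (hc : ¬DivByEdges Γ (t + 1) (c + single i 1 + single j 1))
    (x : MvPolynomial σ K ⧸ edgeIdeal K Γ ^ t) :
    quotCoeff (c + single i 1 + single j 1) (mulEdge K t hij x) = quotCoeff c x := by
  obtain ⟨p, rfl⟩ := Ideal.Quotient.mk_surjective x
  have hmk : mulEdge K t hij (Ideal.Quotient.mk _ p) = Ideal.Quotient.mk _ (X i * X j * p) := rfl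
  have hmul : X i * X j * p = p * X i * X j := by ring
  rw [hmk, quotCoeff_mk hc, quotCoeff_mk fun h => hc (h.add_edge hij), hmul, coeff_mul_X,
    coeff_mul_X]

lemma homCoeff_mulEdge_comp (hij : Γ.Adj i j) {b : σ →₀ ℕ} (hb : k ≤ degree b)
    (hc : ¬DivByEdges Γ (t + 1) (c + single i 1 + single j 1)) :
    homCoeff (mulEdge K t hij ∘ₗ φ) b (c + single i 1 + single j 1) = homCoeff φ b c := by
  rw [homCoeff_eq_quotCoeff hb, homCoeff_eq_quotCoeff hb, LinearMap.comp_apply,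
    quotCoeff_mulEdge hij hc]

/-- The coefficient of `x^a` in `φ (x_i^N) / x_i^N`. When `i` is a vertex of the degree complex at
`a`, it is the same for all `N ≥ k`, so `N = k` serves as the definition. -/
def rayCoeff (φ : ↥(maxIdeal K σ ^ k) →ₗ[MvPolynomial σ K] MvPolynomial σ K ⧸ edgeIdeal K Γ ^ t)
    (a : σ →₀ ℕ) (i : σ) : K :=
  homCoeff φ (single i k) (a + single i k)

lemma homCoeff_single_add_single {l : ℕ} (hkl : k ≤ l) (hi : ¬DivByEdges Γ t (a + single i l)) :
    homCoeff φ (single i l) (a + single i l) = rayCoeff φ a i := by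
  obtain ⟨d, rfl⟩ := Nat.exists_eq_add_of_le hkl
  rw [single_add, ← add_assoc] at hi ⊢
  exact homCoeff_add_add (by simp) hi

lemma IsDegreeEdge.rayCoeff_eq (h : IsDegreeEdge Γ t a i j) :
    rayCoeff φ a i = rayCoeff φ a j := by
  have hi : homCoeff φ (single i k + single j k) (a + single i k + single j k) = rayCoeff φ a i :=
    homCoeff_add_add (by simp) (h k k)
  have hj : homCoeff φ (single j k + single i k) (a + single j k + single i k) = rayCoeff φ a j :=
    homCoeff_add_add (by simp) (by rw [add_right_comm]; exact h k k)
  rw [← hi, ← hj, add_right_comm a, add_comm (single i k)]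

lemma rayCoeff_eq_of_adj (hij : Γ.Adj i j) (hφ : IsEventuallySMul (mulEdge K t hij ∘ₗ φ))
    (hi : IsDegreeVertex Γ t a i) (hj : IsDegreeVertex Γ t a j) :
    rayCoeff φ a i = rayCoeff φ a j := by
  obtain ⟨l, hkl, y, hy⟩ := isEventuallySMul_iff_homCoeff.1 hφ
  have rayCoeff_eq_coeff (u : σ) (hu : IsDegreeVertex Γ t a u)
      (hdiv : ¬DivByEdges Γ (t + 1) (a + single u l + single i 1 + single j 1)) :
      rayCoeff φ a u = coeff (a + single i 1 + single j 1) y := by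
    have hmove : a + single u l + single i 1 + single j 1 =
        a + single i 1 + single j 1 + single u l := by abel
    rw [← homCoeff_single_add_single hkl (hu l),
      ← homCoeff_mulEdge_comp hij (by simpa using hkl) hdiv, hy _ _ (by simp) hdiv, hmove,
      if_pos le_add_self, add_tsub_cancel_right]
  rw [rayCoeff_eq_coeff i hi, rayCoeff_eq_coeff j hj]
  · rw [add_right_comm]
    refine fun h => hj (l + 1) ?_
    rw [single_add, ← add_assoc]
    exact h.pred_of_add_single
  · refine fun h => hi (l + 1) ?_
    rw [single_add, ← add_assoc]
    exact h.pred_of_add_single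

lemma IsDegreeVertex.rayCoeff_eq (hcol : (Γ.induce (closedNbhd Γ i)ᶜ).Colorable 2)
    (hφ : ∀ ⦃u v⦄ (huv : Γ.Adj u v), IsEventuallySMul (mulEdge K t huv ∘ₗ φ))
    (hi : IsDegreeVertex Γ t a i) (hj : IsDegreeVertex Γ t a j) :
    rayCoeff φ a i = rayCoeff φ a j := by
  obtain ⟨f, hf, hif⟩ := hi.exists_mem_closedNbhd_isDegreeEdge hcol j
  rw [hif.rayCoeff_eq]
  rcases hf with rfl | hjf
  · rfl
  · exact (rayCoeff_eq_of_adj hjf (hφ hjf) hj hif.right).symm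

lemma exists_coeff_eq {f : (σ →₀ ℕ) → K} (hf : (Function.support f).Finite) :
    ∃ y : MvPolynomial σ K, ∀ a, coeff a y = f a := by
  classical
  refine ⟨∑ a ∈ hf.toFinset, monomial a (f a), fun a => ?_⟩
  simp only [coeff_sum, coeff_monomial, Finset.sum_ite_eq', Set.Finite.mem_toFinset,
    Function.mem_support, ite_not]
  split_ifs with ha
  · exact ha.symm
  · rfl

lemma finite_support_rayCoeff (i : σ) : (Function.support (rayCoeff φ · i)).Finite := by
  have hker : (Function.support (homCoeff φ (single i k))).Finite := by
    have hk : k ≤ degree (single i k) := by simp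
    simp only [funext (homCoeff_eq_quotCoeff (φ := φ) hk)]
    exact (Finset.finite_toSet (MvPolynomial.support _)).subset fun c hc =>
      MvPolynomial.mem_support_iff.2 hc
  exact hker.preimage (add_left_injective (single i k)).injOn

lemma exists_coeff_eq_rayCoeff [Finite σ]
    (h : ∀ a i j, IsDegreeVertex Γ t a i → IsDegreeVertex Γ t a j →
      rayCoeff φ a i = rayCoeff φ a j) :
    ∃ y : MvPolynomial σ K, ∀ a i, IsDegreeVertex Γ t a i → coeff a y = rayCoeff φ a i := by
  classical
  let f (a : σ →₀ ℕ) : K :=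
    if ha : ∃ i, IsDegreeVertex Γ t a i then rayCoeff φ a ha.choose else 0
  have hf_eq (a i) (hi : IsDegreeVertex Γ t a i) : f a = rayCoeff φ a i := by
    have ha : ∃ i, IsDegreeVertex Γ t a i := ⟨i, hi⟩
    exact (dif_pos ha).trans (h a _ i ha.choose_spec hi)
  have hf_fin : (Function.support f).Finite := by
    refine (Set.finite_iUnion (finite_support_rayCoeff (φ := φ))).subset fun a ha => ?_
    by_cases hex : ∃ i, IsDegreeVertex Γ t a i
    · obtain ⟨i, hi⟩ := hex
      exact Set.mem_iUnion.2 ⟨i, by rwa [Function.mem_support, ← hf_eq a i hi]⟩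
    · exact absurd (dif_neg hex) ha
  obtain ⟨y, hy⟩ := exists_coeff_eq hf_fin
  exact ⟨y, fun a i hi => (hy a).trans (hf_eq a i hi)⟩

lemma isDegreeVertex_of_le_apply (hc : ¬DivByEdges Γ t c) (hci : t ≤ c i) :
    IsDegreeVertex Γ t c i :=
  fun _ h => hc (h.of_add_single_of_le_apply hci)

lemma isDegreeVertex_of_not_divByEdges_add_single {N : ℕ} (hN : t ≤ N)
    (h : ¬DivByEdges Γ t (a + single i N)) : IsDegreeVertex Γ t a i := by
  refine fun M hM => isDegreeVertex_of_le_apply (i := i) h ?_ M ?_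
  · simp only [Finsupp.add_apply, single_eq_same]
    omega
  · rw [add_right_comm]
    exact hM.add_right _

/-- If `c i` is large, then for some `f ≠ i` the coefficient does not change when `c` is shifted
along `f`; but `φ (x_i^N x_f^k)` is divisible by `x_i^N`. -/
lemma homCoeff_single_of_apply_lt (hcol : (Γ.induce (closedNbhd Γ i)ᶜ).Colorable 2)
    (hne : (closedNbhd Γ i)ᶜ.Nonempty) {N : ℕ} (hN : k + t ≤ N) (hc : ¬DivByEdges Γ t c)
    (hci : c i < N) : homCoeff φ (single i N) c = 0 := by
  obtain hlt | hle := lt_or_ge (c i) (N - k)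
  · obtain ⟨d, rfl⟩ := Nat.exists_eq_add_of_le (le_self_add.trans hN)
    rw [single_add]
    exact homCoeff_add_of_not_le (by simp) hc (by rw [single_le_iff]; omega)
  obtain ⟨w, hw⟩ := hne
  obtain ⟨f, hf, hif⟩ := (isDegreeVertex_of_le_apply hc
    (by omega : t ≤ c i)).exists_mem_closedNbhd_isDegreeEdge hcol w
  have hfi : f ≠ i := by
    rintro rfl
    rcases hf with rfl | hwf
    · exact (mem_compl_closedNbhd.1 hw).1 rfl
    · exact (mem_compl_closedNbhd.1 hw).2 hwf.symm
  have hcf : ¬DivByEdges Γ t (c + single f k) := hif.right k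
  have hnle : ¬single i N ≤ c + single f k := by
    rw [single_le_iff]
    simpa [hfi] using hci
  rw [← homCoeff_add_add (by rw [degree_single]; omega) hcf, add_comm (single i N),
    homCoeff_add_of_not_le (by simp) hcf hnle]

lemma homCoeff_single_eq (hcol : (Γ.induce (closedNbhd Γ i)ᶜ).Colorable 2)
    (hne : (closedNbhd Γ i)ᶜ.Nonempty) {y : MvPolynomial σ K}
    (hy : ∀ a, IsDegreeVertex Γ t a i → coeff a y = rayCoeff φ a i) {N : ℕ} (hN : k + t ≤ N)
    (hc : ¬DivByEdges Γ t c) :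
    homCoeff φ (single i N) c = if single i N ≤ c then coeff (c - single i N) y else 0 := by
  split_ifs with hle
  · obtain ⟨a, rfl⟩ := le_iff_exists_add'.1 hle
    rw [add_tsub_cancel_right, homCoeff_single_add_single (by omega) hc]
    exact (hy a (isDegreeVertex_of_not_divByEdges_add_single (by omega) hc)).symm
  · exact homCoeff_single_of_apply_lt hcol hne hN hc (by simpa using hle)

lemma exists_le_apply_of_card_mul_lt_degree [Fintype σ] {b : σ →₀ ℕ} {N : ℕ}
    (hb : Fintype.card σ * N < degree b) : ∃ i, N ≤ b i := by
  rw [degree_eq_sum] at hb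
  obtain ⟨i, -, hi⟩ := Finset.exists_lt_of_sum_lt (s := .univ) (f := fun _ : σ => N) (g := b)
    (by simpa using hb)
  exact ⟨i, hi.le⟩

theorem isEventuallySMul_of_mulEdge_comp [Finite σ]
    (hcol : ∀ i, (Γ.induce (closedNbhd Γ i)ᶜ).Colorable 2)
    (hne : ∀ i, (closedNbhd Γ i)ᶜ.Nonempty)
    (hφ : ∀ ⦃i j⦄ (hij : Γ.Adj i j), IsEventuallySMul (mulEdge K t hij ∘ₗ φ)) :
    IsEventuallySMul φ := by
  have := Fintype.ofFinite σ
  obtain ⟨y, hy⟩ := exists_coeff_eq_rayCoeff fun a i j hi hj => hi.rayCoeff_eq (hcol i) hφ hj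
  refine isEventuallySMul_iff_homCoeff.2
    ⟨max k (Fintype.card σ * (k + t) + 1), le_max_left _ _, y, fun b c hb hc => ?_⟩
  obtain ⟨i, hi⟩ := exists_le_apply_of_card_mul_lt_degree ((le_max_right _ _).trans hb)
  rw [← single_add_erase i b]
  have hdeg : k ≤ degree (single i (b i)) := by rw [degree_single]; omega
  by_cases hd : b.erase i ≤ c
  · obtain ⟨c, rfl⟩ := le_iff_exists_add'.1 hd
    rw [homCoeff_add_add hdeg hc, homCoeff_single_eq (hcol i) (hne i) (fun a => hy a i) hi
      fun h => hc (h.add_right _)]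
    simp only [add_le_add_iff_right, add_tsub_add_eq_tsub_right]
  · rw [homCoeff_add_of_not_le hdeg hc hd, if_neg fun h => hd (le_add_self.trans h)]

end Gluing

theorem subsingleton_locCoh_one_iff {K σ : Type} [Field K] {I : Ideal (MvPolynomial σ K)} :
    Subsingleton (locCoh K I 1) ↔
      ∀ (k : ℕ) (φ : ↥(maxIdeal K σ ^ k) →ₗ[MvPolynomial σ K] MvPolynomial σ K ⧸ I),
        IsEventuallySMul φ :=
  subsingleton_localCohomology_one_iff (maxIdeal K σ) (ModuleCat.of _ (MvPolynomial σ K ⧸ I))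

theorem stmt12_general (k : Type) [Field k] {σ : Type} [Finite σ] (Γ : SimpleGraph σ)
    (hdom : ∀ (m : ℕ) (c : ZMod m → σ), IsOddCycle Γ m c → Dominating Γ (Set.range c)) (t : ℕ)
    (h : Nontrivial (locCoh k (edgeIdeal k Γ ^ t) 1)) :
    Nontrivial (locCoh k (edgeIdeal k Γ ^ (t + 1)) 1) := by
  by_contra hvanish
  rw [not_nontrivial_iff_subsingleton, subsingleton_locCoh_one_iff] at hvanish
  by_cases hv : ∃ v, ∀ u, u ≠ v → Γ.Adj v u
  · obtain ⟨v, hv⟩ := hv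
    exact not_isEventuallySMul_divVarHom hv (hvanish _ _)
  have hne (i : σ) : (closedNbhd Γ i)ᶜ.Nonempty := by
    push Not at hv
    exact (hv i).imp fun _ => mem_compl_closedNbhd.2
  refine not_subsingleton_iff_nontrivial.2 h (subsingleton_locCoh_one_iff.2 fun l φ => ?_)
  exact isEventuallySMul_of_mulEdge_comp (two_colorable_induce_compl_closedNbhd hdom) hne
    fun _ _ _ => hvanish _ _

/-- Let `Γ` be a connected non-bipartite graph in which the vertex set
of every odd cycle is dominating. If `H^1_m(R/I^t) ≠ 0` for some `t ≥ 1`, then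
`H^1_m(R/I^{t+1}) ≠ 0`. -/
theorem stmt12 (k : Type) [Field k] (n : ℕ) (Γ : SimpleGraph (Fin n))
    (hiso : NoIsolated Γ) (hconn : Γ.Connected) (hnb : ¬ Γ.Colorable 2)
    (hdom : ∀ (m : ℕ) (c : ZMod m → Fin n), IsOddCycle Γ m c →
      Dominating Γ (Set.range c))
    (t : ℕ) (ht : 1 ≤ t)
    (h : Nontrivial (locCoh k ((edgeIdeal k Γ) ^ t) 1)) :
    Nontrivial (locCoh k ((edgeIdeal k Γ) ^ (t + 1)) 1) :=
  stmt12_general k Γ hdom t h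

end
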